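/- arXiv:1409.1874 — 2 statements merged into one kernel-verified Lean document; each statement's English description precedes it below -/
import Mathlib

section
/- Let 0 < α, η with η ≥ 2α², and suppose n is sufficiently large in terms of α and η. If G is an (η, α)-robust graph on n vertices, then for every pair of vertices x, y ∈ V(G) there exists an integer i with 1 ≤ i ≤ 1/α² such that the number of x,y-paths in G with exactly i internal vertices is at least (α⁴n)^i. -/
/-- Number of ordered pairs `(x, y)` with `x ∈ X`, `y ∈ Y` and `xy ∈ E(G)`. -/
noncomputable def eBetween {V : Type*} (G : SimpleGraph V) (X Y : Set V) : ℕ :=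
  {p : V × V | p.1 ∈ X ∧ p.2 ∈ Y ∧ G.Adj p.1 p.2}.ncard

/-! Fix `x`, put `N = cn` with `c` slightly larger than `α⁴`, and let `X k` be the set of vertices
joined to `x`, for some `t ≤ k`, by at least `N ^ t` walks with `t` internal vertices. A vertex with
at least `(k + 1) N` neighbours in `X k` has `N` of them for one and the same `t`, hence lies in
`X (k + 1)`. So the vertices outside `X (k + 1)` see little of `X k`, and as the cut around `X k` is
dense, the complement of `X k` shrinks by a factor `1 + α` at every step. It starts at no more than
`(1 - α)n + α`, since cutting off a single vertex bounds the degree of `x` from below. After fewer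
than `1 / α²` steps it is smaller than the neighbourhood of `y`, so `y` has enough neighbours in
`X k`. The `O(n ^ (i - 1))` resulting walks that are not paths are absorbed by the excess of `c`
over `α⁴`. -/

open Filter Finset Topology

universe u

/-- The cut condition in the definition of an `(η, α)`-robust graph. -/
def CutDense {V : Type*} (G : SimpleGraph V) (α : ℝ) : Prop :=
  ∀ X : Set V, α * X.ncard * Xᶜ.ncard ≤ (eBetween G X Xᶜ : ℝ)

section Cuts

lemma eBetween_coe_eq_sum {V : Type*} (G : SimpleGraph V) [DecidableRel G.Adj] (X Y : Finset V) :
    eBetween G X Y = ∑ v ∈ Y, #{u ∈ X | G.Adj u v} := by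
  have hset : {p : V × V | p.1 ∈ (X : Set V) ∧ p.2 ∈ (Y : Set V) ∧ G.Adj p.1 p.2} =
      G.interedges X Y := by
    ext p
    simp [SimpleGraph.mem_interedges_iff]
  rw [eBetween, hset, Set.ncard_coe_finset, SimpleGraph.interedges_def]
  simp only [card_filter, sum_product_right]

variable {V : Type*} [Fintype V] {G : SimpleGraph V} {α : ℝ}

lemma lt_one_of_mul_card_le_ncard_neighborSet {η : ℝ} {v : V}
    (h : η * Fintype.card V ≤ (G.neighborSet v).ncard) : η < 1 := by
  classical
  have hlt : ((G.neighborSet v).ncard : ℝ) < Fintype.card V := by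
    rw [← G.coe_neighborFinset, Set.ncard_coe_finset]
    exact_mod_cast G.degree_lt_card_verts v
  exact lt_of_mul_lt_mul_right ((h.trans_lt hlt).trans_eq (one_mul _).symm) (Nat.cast_nonneg _)

variable [DecidableRel G.Adj]

lemma CutDense.mul_card_le_sum [DecidableEq V] (hG : CutDense G α) (X : Finset V) :
    α * #X * #Xᶜ ≤ ∑ v ∈ Xᶜ, (#{u ∈ X | G.Adj u v} : ℝ) := by
  have h := hG X
  rw [← coe_compl, eBetween_coe_eq_sum] at h
  simpa only [Set.ncard_coe_finset, Nat.cast_sum] using h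

lemma CutDense.mul_card_sub_one_le_degree (hG : CutDense G α) (v : V) :
    α * (Fintype.card V - 1) ≤ G.degree v := by
  classical
  have hV : 1 ≤ Fintype.card V := Fintype.card_pos_iff.2 ⟨v⟩
  have h := hG.mul_card_le_sum {v}ᶜ
  have hdeg : ({u ∈ ({v}ᶜ : Finset V) | G.Adj u v} : Finset V) = G.neighborFinset v := by
    ext u
    simpa [G.adj_comm u v] using fun h : G.Adj v u => h.ne'
  simpa [hdeg, card_compl, Nat.cast_sub hV] using h

/-- If the vertices outside `Z ⊇ X` receive few edges from `X`, then most of the edges leaving `X`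
land in `Z \ X`, so `Z \ X` must be large. -/
lemma CutDense.one_add_mul_card_compl_le [DecidableEq V] (hG : CutDense G α) (hα : α < 1)
    {X Z : Finset V} (hXZ : X ⊆ Z) (hX : X.Nonempty)
    (hZ : ∀ v ∉ Z, (#{u ∈ X | G.Adj u v} : ℝ) ≤ α ^ 2 * #X) :
    (1 + α) * #Zᶜ ≤ #Xᶜ := by
  have hsub : Zᶜ ⊆ Xᶜ := compl_subset_compl.2 hXZ
  have hcard : (#(Xᶜ \ Zᶜ) : ℝ) = #Xᶜ - #Zᶜ := cast_card_sdiff hsub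
  have hin : ∑ v ∈ Xᶜ \ Zᶜ, (#{u ∈ X | G.Adj u v} : ℝ) ≤ (#Xᶜ - #Zᶜ) * #X := by
    rw [← hcard, ← nsmul_eq_mul]
    exact sum_le_card_nsmul _ _ _ fun v _ => mod_cast card_filter_le _ _
  have hout : ∑ v ∈ Zᶜ, (#{u ∈ X | G.Adj u v} : ℝ) ≤ #Zᶜ * (α ^ 2 * #X) := by
    rw [← nsmul_eq_mul]
    exact sum_le_card_nsmul _ _ _ fun v hv => hZ v (mem_compl.1 hv)
  have hcut := hG.mul_card_le_sum X
  rw [← sum_sdiff hsub] at hcut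
  have hpos : 0 < (#X : ℝ) * (1 - α) :=
    mul_pos (mod_cast hX.card_pos) (sub_pos.2 hα)
  refine le_of_mul_le_mul_left ?_ hpos
  linear_combination hcut + hin + hout

end Cuts

section WalkCounts

lemma exists_internal_getVert_eq_of_not_isPath {V : Type*} {G : SimpleGraph V} {x y : V}
    (hxy : x ≠ y) {p : G.Walk x y} (hp : ¬ p.IsPath) :
    ∃ a ∈ Ioo 0 p.length, ∃ b ≤ p.length, a ≠ b ∧ p.getVert a = p.getVert b := by
  simp only [← SimpleGraph.Walk.IsPath.getVert_injOn_iff, Set.InjOn, Set.mem_ofPred_eq] at hp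
  push Not at hp
  obtain ⟨a, ha, b, hb, hab, hne⟩ := hp
  by_cases hai : a ∈ Ioo 0 p.length
  · exact ⟨a, hai, b, hb, hne, hab⟩
  by_cases hbi : b ∈ Ioo 0 p.length
  · exact ⟨b, hbi, a, ha, hne.symm, hab.symm⟩
  exfalso
  rw [mem_Ioo] at hai hbi
  obtain ⟨rfl, rfl⟩ | ⟨rfl, rfl⟩ : a = 0 ∧ b = p.length ∨ a = p.length ∧ b = 0 := by lia
  · exact hxy (by simpa using hab)
  · exact hxy (by simpa using hab.symm)

variable {V : Type*} [Fintype V] [DecidableEq V] (G : SimpleGraph V) [DecidableRel G.Adj]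

/-- The walk is determined by its vertices at the other internal positions. -/
lemma card_filter_getVert_eq_getVert_le (x y : V) {ℓ a b : ℕ} (ha : a ∈ Ioo 0 ℓ) (hb : b ≤ ℓ)
    (hab : a ≠ b) :
    #{p ∈ G.finsetWalkLength ℓ x y | p.getVert a = p.getVert b} ≤ Fintype.card V ^ (ℓ - 2) := by
  let others := (Ioo 0 ℓ).erase a
  have hinj : Set.InjOn (fun (p : G.Walk x y) (k : others) => p.getVert k)
      ({p ∈ G.finsetWalkLength ℓ x y | p.getVert a = p.getVert b} : Finset (G.Walk x y)) := by
    intro p hp q hq hpq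
    simp only [coe_filter, Set.mem_ofPred_eq, SimpleGraph.mem_finsetWalkLength_iff] at hp hq
    have heq : ∀ k ≤ ℓ, k ≠ a → p.getVert k = q.getVert k := by
      intro k hk hka
      rcases Nat.eq_zero_or_pos k with rfl | hk0
      · simp
      rcases hk.eq_or_lt with rfl | hkl
      · rw [p.getVert_of_length_le hp.1.le, q.getVert_of_length_le hq.1.le]
      · exact congrFun hpq ⟨k, mem_erase.2 ⟨hka, mem_Ioo.2 ⟨hk0, hkl⟩⟩⟩
    refine SimpleGraph.Walk.ext_getVert_le_length (hp.1.trans hq.1.symm) fun k hk => ?_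
    rcases eq_or_ne k a with rfl | hka
    · rw [hp.2, hq.2, heq b hb hab.symm]
    · exact heq k (hk.trans hp.1.le) hka
  calc _ ≤ #(univ : Finset (others → V)) :=
        card_le_card_of_injOn _ (fun _ _ => mem_coe.2 (mem_univ _)) hinj
    _ = Fintype.card V ^ (ℓ - 2) := by
        simp [others, card_erase_of_mem ha, Nat.sub_sub]

lemma card_filter_not_isPath_le {x y : V} (hxy : x ≠ y) (ℓ : ℕ) :
    #{p ∈ G.finsetWalkLength ℓ x y | ¬ p.IsPath} ≤ ℓ ^ 2 * Fintype.card V ^ (ℓ - 2) := by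
  let pairs := {ab ∈ Ioo 0 ℓ ×ˢ range (ℓ + 1) | ab.1 ≠ ab.2}
  have hcover : {p ∈ G.finsetWalkLength ℓ x y | ¬ p.IsPath} ⊆ pairs.biUnion fun ab =>
      {p ∈ G.finsetWalkLength ℓ x y | p.getVert ab.1 = p.getVert ab.2} := by
    intro p hp
    simp only [mem_filter, SimpleGraph.mem_finsetWalkLength_iff] at hp
    obtain ⟨rfl, hnp⟩ := hp
    obtain ⟨a, ha, b, hb, hne, hab⟩ := exists_internal_getVert_eq_of_not_isPath hxy hnp
    refine mem_biUnion.2 ⟨(a, b), ?_, ?_⟩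
    · simpa [pairs, hne, Nat.lt_succ_iff, hb] using ha
    · exact mem_filter.2 ⟨SimpleGraph.mem_finsetWalkLength_iff.2 rfl, hab⟩
  have hpairs : #pairs ≤ ℓ ^ 2 :=
    calc #pairs ≤ (ℓ - 1) * (ℓ + 1) := (card_filter_le _ _).trans_eq (by simp)
      _ ≤ ℓ ^ 2 := by cases ℓ <;> simp; nlinarith
  calc _ ≤ #pairs * Fintype.card V ^ (ℓ - 2) := by
        refine (card_le_card hcover).trans (card_biUnion_le_card_mul _ _ _ fun ab hab => ?_)
        simp only [pairs, mem_filter, mem_product, mem_range, Nat.lt_succ_iff] at hab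
        exact card_filter_getVert_eq_getVert_le G x y hab.1.1 hab.1.2 hab.2
    _ ≤ _ := by gcongr

lemma adjMatrix_pow_apply_le_card_isPath_add {x y : V} (hxy : x ≠ y) (ℓ : ℕ) :
    (G.adjMatrix ℝ ^ ℓ) x y ≤ Nat.card {p : G.Walk x y // p.IsPath ∧ p.length = ℓ} +
      ℓ ^ 2 * (Fintype.card V : ℝ) ^ (ℓ - 2) := by
  have hpaths : Nat.card {p : G.Walk x y // p.IsPath ∧ p.length = ℓ} =
      #{p ∈ G.finsetWalkLength ℓ x y | p.IsPath} :=
    Nat.subtype_card _ fun p => by simp [SimpleGraph.mem_finsetWalkLength_iff, and_comm]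
  rw [SimpleGraph.adjMatrix_pow_apply_eq_card_walk, SimpleGraph.card_set_walk_length_eq, hpaths,
    ← card_filter_add_card_filter_not (fun p : G.Walk x y => p.IsPath)]
  exact_mod_cast Nat.add_le_add_left (card_filter_not_isPath_le G hxy ℓ) _

end WalkCounts

section Expansion

variable {V : Type*} [Fintype V] [DecidableEq V] (G : SimpleGraph V) [DecidableRel G.Adj]

/-- The vertices joined to `x`, for some `t ≤ k`, by at least `N ^ t` walks with `t` internal
vertices (hence of length `t + 1`). -/
noncomputable def richSet (x : V) (N : ℝ) (k : ℕ) : Finset V :=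
  {u | ∃ t ≤ k, N ^ t ≤ (G.adjMatrix ℝ ^ (t + 1)) x u}

/-- The numerical conditions for `K` rounds of expansion, from `richSet G x N k` to
`richSet G x N (k + 1)` with `N = α²βn`, to join any two vertices of an `α`-cut-dense graph on `n`
vertices with minimum degree at least `δn`. After `k` rounds at most `(1 - δ)n / (1 + kα)` vertices
are missing; `expand` makes the reached set big enough for another round, and `finish` makes the
missing set so small that the second vertex has `(K + 1)N` neighbours outside it. -/
structure SufficientRounds (α δ β : ℝ) (K : ℕ) : Prop where
  expand : ∀ k < K, 1 - δ < (1 + k * α) * (1 - (k + 1) * β)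
  finish : 1 - δ < (1 + K * α) * (δ - (K + 1) * (α ^ 2 * β))

variable {G} {x : V} {N : ℝ}

lemma mem_richSet {k : ℕ} {u : V} :
    u ∈ richSet G x N k ↔ ∃ t ≤ k, N ^ t ≤ (G.adjMatrix ℝ ^ (t + 1)) x u := by
  simp [richSet]

lemma neighborFinset_subset_richSet_zero : G.neighborFinset x ⊆ richSet G x N 0 := fun u hu =>
  mem_richSet.2 ⟨0, le_rfl, by simp_all⟩

lemma richSet_subset_succ (k : ℕ) : richSet G x N k ⊆ richSet G x N (k + 1) := fun u hu => by
  obtain ⟨t, ht, h⟩ := mem_richSet.1 hu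
  exact mem_richSet.2 ⟨t, by lia, h⟩

lemma card_mul_le_adjMatrix_pow_succ_apply {S : Finset V} {v : V} {c : ℝ} {ℓ : ℕ}
    (hadj : ∀ u ∈ S, G.Adj u v) (hS : ∀ u ∈ S, c ≤ (G.adjMatrix ℝ ^ ℓ) x u) :
    #S * c ≤ (G.adjMatrix ℝ ^ (ℓ + 1)) x v := by
  rw [pow_succ, SimpleGraph.mul_adjMatrix_apply, ← nsmul_eq_mul]
  refine (card_nsmul_le_sum S _ _ hS).trans (sum_le_sum_of_subset_of_nonneg ?_ fun u _ _ => ?_)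
  · exact fun u hu => (G.mem_neighborFinset v u).2 (hadj u hu).symm
  · rw [SimpleGraph.adjMatrix_pow_apply_eq_card_walk]
    positivity

/-- By pigeonhole, `N` of the rich neighbours of `v` are rich for the same number of internal
vertices. -/
lemma exists_pow_le_adjMatrix_pow_of_le_card (hN : 0 ≤ N) {v : V} {k : ℕ}
    (h : (k + 1) * N ≤ #{u ∈ richSet G x N k | G.Adj u v}) :
    ∃ t ≤ k, N ^ (t + 1) ≤ (G.adjMatrix ℝ ^ (t + 2)) x v := by
  let level (t : ℕ) : Finset V := {u | N ^ t ≤ (G.adjMatrix ℝ ^ (t + 1)) x u ∧ G.Adj u v}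
  have hcover : {u ∈ richSet G x N k | G.Adj u v} ⊆ (range (k + 1)).biUnion level := by
    intro u hu
    obtain ⟨hu, huv⟩ := mem_filter.1 hu
    obtain ⟨t, ht, hle⟩ := mem_richSet.1 hu
    exact mem_biUnion.2 ⟨t, by simpa [Nat.lt_succ_iff] using ht, by simp [level, hle, huv]⟩
  have hsum : ∑ _t ∈ range (k + 1), N ≤ ∑ t ∈ range (k + 1), (#(level t) : ℝ) :=
    calc _ = (k + 1) * N := by simp
      _ ≤ #{u ∈ richSet G x N k | G.Adj u v} := h
      _ ≤ _ := mod_cast (card_le_card hcover).trans card_biUnion_le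
  obtain ⟨t, ht, hlevel⟩ := exists_le_of_sum_le (by simp) hsum
  refine ⟨t, Nat.lt_succ_iff.1 (mem_range.1 ht), ?_⟩
  calc N ^ (t + 1) = N * N ^ t := pow_succ' N t
    _ ≤ #(level t) * N ^ t := by gcongr
    _ ≤ _ := card_mul_le_adjMatrix_pow_succ_apply (fun u hu => (mem_filter.1 hu).2.2)
        fun u hu => (mem_filter.1 hu).2.1

lemma card_adj_richSet_lt_of_notMem (hN : 0 ≤ N) {v : V} {k : ℕ}
    (hv : v ∉ richSet G x N (k + 1)) :
    (#{u ∈ richSet G x N k | G.Adj u v} : ℝ) < (k + 1) * N := by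
  contrapose! hv
  obtain ⟨t, ht, h⟩ := exists_pow_le_adjMatrix_pow_of_le_card hN hv
  exact mem_richSet.2 ⟨t + 1, by lia, h⟩

lemma card_compl_eq_card_sub (S : Finset V) : (#Sᶜ : ℝ) = Fintype.card V - #S := by
  rw [card_compl, Nat.cast_sub (card_le_univ S)]

lemma CutDense.one_add_mul_card_compl_richSet_succ_le {α β : ℝ} (hG : CutDense G α) (hα : α < 1)
    (hβ : 0 ≤ β) {k : ℕ}
    (hlarge : (k + 1) * β * Fintype.card V < #(richSet G x (α ^ 2 * β * Fintype.card V) k)) :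
    (1 + α) * #(richSet G x (α ^ 2 * β * Fintype.card V) (k + 1))ᶜ ≤
      (#(richSet G x (α ^ 2 * β * Fintype.card V) k)ᶜ : ℝ) := by
  refine hG.one_add_mul_card_compl_le hα (richSet_subset_succ k) ?_ fun v hv => ?_
  · have : (0 : ℝ) < #(richSet G x (α ^ 2 * β * Fintype.card V) k) :=
      lt_of_le_of_lt (by positivity) hlarge
    exact card_pos.1 (mod_cast this)
  · refine (card_adj_richSet_lt_of_notMem (by positivity) hv).le.trans ?_
    calc (k + 1) * (α ^ 2 * β * Fintype.card V) = α ^ 2 * ((k + 1) * β * Fintype.card V) := by ring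
      _ ≤ _ := by gcongr

variable {α δ β : ℝ} {K : ℕ}

lemma SufficientRounds.one_add_mul_card_compl_richSet_le (hK : SufficientRounds α δ β K)
    (hα : 0 ≤ α) (hα1 : α < 1) (hβ : 0 ≤ β) (hG : CutDense G α)
    (hdeg : δ * Fintype.card V ≤ G.degree x) {k : ℕ} (hk : k ≤ K) :
    (1 + k * α) * #(richSet G x (α ^ 2 * β * Fintype.card V) k)ᶜ ≤ (1 - δ) * Fintype.card V := by
  have hV : (0 : ℝ) < Fintype.card V := mod_cast Fintype.card_pos_iff.2 ⟨x⟩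
  induction k with
  | zero =>
    have hsub : (G.degree x : ℝ) ≤ #(richSet G x (α ^ 2 * β * Fintype.card V) 0) :=
      mod_cast card_le_card neighborFinset_subset_richSet_zero
    rw [card_compl_eq_card_sub]
    linear_combination hsub + hdeg
  | succ k ih =>
    have hbound := ih (by lia)
    have hmissing : (#(richSet G x (α ^ 2 * β * Fintype.card V) k)ᶜ : ℝ) <
        (1 - (k + 1) * β) * Fintype.card V := by
      refine lt_of_mul_lt_mul_left (hbound.trans_lt ?_) (by positivity : 0 ≤ 1 + k * α)
      rw [← mul_assoc]
      exact mul_lt_mul_of_pos_right (hK.expand k (by lia)) hV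
    have hlarge : (k + 1) * β * Fintype.card V <
        #(richSet G x (α ^ 2 * β * Fintype.card V) k) := by
      rw [card_compl_eq_card_sub] at hmissing
      linear_combination hmissing
    have hstep := hG.one_add_mul_card_compl_richSet_succ_le hα1 hβ hlarge
    generalize #(richSet G x (α ^ 2 * β * Fintype.card V) (k + 1))ᶜ = C at hstep ⊢
    have hcross : 0 ≤ k * α ^ 2 * C := by positivity
    calc (1 + ((k + 1 : ℕ) : ℝ) * α) * C
        ≤ (1 + k * α) * ((1 + α) * C) := by
          push_cast
          linear_combination hcross
      _ ≤ _ := (mul_le_mul_of_nonneg_left hstep (by positivity)).trans hbound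

lemma SufficientRounds.exists_pow_le_adjMatrix_pow (hK : SufficientRounds α δ β K)
    (hα : 0 ≤ α) (hα1 : α < 1) (hβ : 0 ≤ β) (hG : CutDense G α)
    (hdeg : ∀ v, δ * Fintype.card V ≤ G.degree v) (x y : V) :
    ∃ t ≤ K, (α ^ 2 * β * Fintype.card V) ^ (t + 1) ≤ (G.adjMatrix ℝ ^ (t + 2)) x y := by
  have hV : (0 : ℝ) < Fintype.card V := mod_cast Fintype.card_pos_iff.2 ⟨x⟩
  refine exists_pow_le_adjMatrix_pow_of_le_card (by positivity) ?_
  set X := richSet G x (α ^ 2 * β * Fintype.card V) K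
  have hmissing : (#Xᶜ : ℝ) < (δ - (K + 1) * (α ^ 2 * β)) * Fintype.card V := by
    have hbound := hK.one_add_mul_card_compl_richSet_le hα hα1 hβ hG (hdeg x) le_rfl
    refine lt_of_mul_lt_mul_left (hbound.trans_lt ?_) (by positivity : 0 ≤ 1 + K * α)
    rw [← mul_assoc]
    exact mul_lt_mul_of_pos_right hK.finish hV
  have hcover : G.neighborFinset y ⊆ {u ∈ X | G.Adj u y} ∪ Xᶜ := by
    intro u hu
    by_cases h : u ∈ X <;> simp_all [G.adj_comm]
  have hcard : (G.degree y : ℝ) ≤ #{u ∈ X | G.Adj u y} + #Xᶜ :=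
    mod_cast (card_le_card hcover).trans (card_union_le _ _)
  linear_combination hcard + hdeg y + hmissing

end Expansion

section Numerics

variable {α δ β : ℝ} {K : ℕ}

lemma exists_sufficientRounds_of_le_half (hα : 0 < α) (hα2 : α ≤ 1 / 2) :
    ∃ K : ℕ, (K + 1) * α ^ 2 ≤ 1 ∧ SufficientRounds α α (α ^ 2) K := by
  -- The least `K` with `1 + K * α ≥ 1 / α`.
  let K := ⌈(1 - α) / α ^ 2⌉₊
  have hle : 1 - α ≤ K * α ^ 2 := (div_le_iff₀ (by positivity)).1 (Nat.le_ceil _)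
  have hlt : K * α ^ 2 < 1 - α + α ^ 2 := by
    have := Nat.ceil_lt_add_one (a := (1 - α) / α ^ 2) (div_nonneg (by linarith) (by positivity))
    rwa [div_add_one (by positivity), lt_div_iff₀ (by positivity)] at this
  have hK1 : (K + 1) * α ^ 2 < 1 := by nlinarith
  refine ⟨K, hK1.le, fun k hk => ?_, ?_⟩
  · have hk : k * α ^ 2 < 1 - α := (lt_div_iff₀ (by positivity)).1 (Nat.lt_ceil.1 hk)
    have hfactor : 0 < (1 - α - k * α ^ 2) * (k * α + α) :=
      mul_pos (sub_pos.2 hk) (by positivity)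
    linear_combination hfactor
  · calc 1 - α ≤ (1 + K * α) * α * (1 - α) :=
          le_mul_of_one_le_left (by linarith) (by linear_combination hle)
      _ < (1 + K * α) * α * (1 - α * ((K + 1) * α ^ 2)) := by
          gcongr
          nlinarith
      _ = _ := by ring

lemma exists_sufficientRounds (hα : 0 < α) (hα1 : α < 1) :
    ∃ K : ℕ, (K + 1) * α ^ 2 ≤ 1 ∧ SufficientRounds α α (α ^ 2) K := by
  rcases le_or_gt α (1 / 2) with hsmall | hmid
  · exact exists_sufficientRounds_of_le_half hα hsmall
  rcases le_or_gt α (3 / 5) with hmid' | hlarge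
  · have hsq : α ^ 2 ≤ 9 / 25 := by nlinarith
    refine ⟨1, by rw [Nat.cast_one]; linarith, fun k hk => ?_, ?_⟩
    · obtain rfl : k = 0 := Nat.lt_one_iff.1 hk
      rw [Nat.cast_zero]
      nlinarith
    · rw [Nat.cast_one]
      nlinarith [mul_nonneg (sub_nonneg.2 hmid.le) (sub_nonneg.2 hmid')]
  · have hfactor : 0 < (1 - α) * (α ^ 3 + α ^ 2 + α - 1) :=
      mul_pos (sub_pos.2 hα1) (by nlinarith [pow_pos hα 3])
    refine ⟨0, by rw [Nat.cast_zero]; nlinarith, fun k hk => absurd hk k.not_lt_zero, ?_⟩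
    rw [Nat.cast_zero]
    linear_combination hfactor

lemma SufficientRounds.eventually_perturb (hK : SufficientRounds α δ β K) :
    ∀ᶠ ε in 𝓝 0, SufficientRounds α (δ - ε) (β + ε) K := by
  have hexpand : ∀ᶠ ε in 𝓝 (0 : ℝ), ∀ k ∈ range K,
      1 - (δ - ε) < (1 + k * α) * (1 - (k + 1) * (β + ε)) := by
    refine (eventually_all_finset _).2 fun k hk => ?_
    refine ContinuousAt.eventually_lt (by fun_prop) (by fun_prop) ?_
    simpa using hK.expand k (mem_range.1 hk)
  have hfinish : ∀ᶠ ε in 𝓝 (0 : ℝ),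
      1 - (δ - ε) < (1 + K * α) * (δ - ε - (K + 1) * (α ^ 2 * (β + ε))) := by
    refine ContinuousAt.eventually_lt (by fun_prop) (by fun_prop) ?_
    simpa using hK.finish
  filter_upwards [hexpand, hfinish] with ε hε hε'
  exact ⟨fun k hk => hε k (mem_range.2 hk), hε'⟩

lemma eventually_pow_add_le_pow {b c : ℝ} (hb : 0 ≤ b) (hbc : b < c) (C : ℝ) (t : ℕ) :
    ∀ᶠ n : ℕ in atTop, (b * n) ^ (t + 1) + C * (n : ℝ) ^ t ≤ (c * n) ^ (t + 1) := by
  have hpos : 0 < c ^ (t + 1) - b ^ (t + 1) := sub_pos.2 (pow_lt_pow_left₀ hbc hb t.succ_ne_zero)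
  filter_upwards [((tendsto_natCast_atTop_atTop (R := ℝ)).atTop_mul_const hpos).eventually_ge_atTop
    C] with n hn
  have h := mul_le_mul_of_nonneg_right hn (by positivity : (0 : ℝ) ≤ (n : ℝ) ^ t)
  linear_combination h

end Numerics

theorem connecting_lemma_i_general {α : ℝ} (hα : 0 < α) (hα1 : α < 1) :
    ∃ n₀ : ℕ, ∀ (V : Type u) [Fintype V] (G : SimpleGraph V), n₀ ≤ Fintype.card V →
      CutDense G α → ∀ x y : V, x ≠ y →
        ∃ i : ℕ, 1 ≤ i ∧ (i : ℝ) ≤ 1 / α ^ 2 ∧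
          (α ^ 4 * Fintype.card V) ^ i ≤
            (Nat.card {p : G.Walk x y // p.IsPath ∧ p.length = i + 1} : ℝ) := by
  obtain ⟨K, hKα, hK⟩ := exists_sufficientRounds hα hα1
  obtain ⟨ε, hKε, hε : 0 < ε⟩ :=
    ((hK.eventually_perturb.filter_mono nhdsWithin_le_nhds).and
      (self_mem_nhdsWithin (s := Set.Ioi (0 : ℝ)))).exists
  have hc : α ^ 4 < α ^ 2 * (α ^ 2 + ε) := by nlinarith [mul_pos (pow_pos hα 2) hε]
  obtain ⟨n₀, hn₀⟩ := eventually_atTop.1 <|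
    ((tendsto_natCast_atTop_atTop.const_mul_atTop hε).eventually_ge_atTop α).and <|
    (eventually_all_finset (range (K + 1))).2 fun t _ =>
      eventually_pow_add_le_pow (pow_nonneg hα.le 4) hc (((t + 2 : ℕ) : ℝ) ^ 2) t
  refine ⟨n₀, fun V _ G hV hG x y hxy => ?_⟩
  classical
  obtain ⟨hn, hpow⟩ := hn₀ _ hV
  have hdeg (v : V) : (α - ε) * Fintype.card V ≤ G.degree v := by
    linear_combination hG.mul_card_sub_one_le_degree v + hn
  obtain ⟨t, ht, hwalks⟩ :=
    hKε.exists_pow_le_adjMatrix_pow hα.le hα1 (by positivity) hG hdeg x y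
  refine ⟨t + 1, by lia, ?_, ?_⟩
  · rw [le_div_iff₀ (by positivity)]
    exact hKα.trans' (by push_cast; gcongr)
  · have hpaths := adjMatrix_pow_apply_le_card_isPath_add G hxy (t + 2)
    have hgap := hpow t (mem_range.2 (Nat.lt_succ_iff.2 ht))
    exact le_of_add_le_add_right (hgap.trans (hwalks.trans hpaths))

/-- Connecting Lemma, part (i): let `0 < α, η` with `η ≥ 2α²` and `n`
sufficiently large in terms of `α, η`. If `G` is an `(η, α)`-robust graph on `n`
vertices, then for every pair of distinct vertices `x, y` there is `1 ≤ i ≤ 1/α²`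
such that the number of `x,y`-paths with exactly `i` internal vertices is at least
`(α⁴n)^i`. -/
theorem connecting_lemma_i :
    ∀ α η : ℝ, 0 < α → 0 < η → 2 * α ^ 2 ≤ η →
    ∃ n₀ : ℕ, ∀ n : ℕ, n₀ ≤ n →
    ∀ (V : Type) [Fintype V] (G : SimpleGraph V), Fintype.card V = n →
    (∀ v : V, η * n ≤ ((G.neighborSet v).ncard : ℝ)) →
    (∀ X : Set V, α * X.ncard * Xᶜ.ncard ≤ (eBetween G X Xᶜ : ℝ)) →
    ∀ x y : V, x ≠ y →
      ∃ i : ℕ, 1 ≤ i ∧ (i : ℝ) ≤ 1 / α ^ 2 ∧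
        (α ^ 4 * n) ^ i ≤
          (Nat.card {p : G.Walk x y // p.IsPath ∧ p.length = i + 1} : ℝ) := by
  intro α η hα _ hη
  rcases lt_or_ge α 1 with hα1 | hα1
  · obtain ⟨n₀, h⟩ := connecting_lemma_i_general hα hα1
    exact ⟨n₀, fun n hn V _ G hV _ hG => by subst hV; exact h V G hn hG⟩
  · refine ⟨0, fun n _ V _ G hV hdeg _ x => ?_⟩
    have hη1 : η < 1 := lt_one_of_mul_card_le_ncard_neighborSet (hV ▸ hdeg x)
    nlinarith
end

section
/- Let ℓ be a positive integer, let 0 < σᵢ ≤ 1 for i ∈ [ℓ], and let σ = min{σ₁, …, σ_ℓ}. For each i let 𝒮ᵢ be the set of i-tuples of distinct elements of [n], let 𝒮 ⊆ ⋃ᵢ 𝒮ᵢ, and let 𝒯 be a finite set with |𝒯| ≤ |𝒮|. There exists n₀ such that for n ≥ n₀ the following holds: if Γ is a bipartite graph between 𝒮 and 𝒯 such that every u ∈ 𝒯 has, for some i ∈ [ℓ], at least σᵢnⁱ neighbors in 𝒮 ∩ 𝒮ᵢ, then there exists a family 𝒜* ⊆ 𝒮 of pairwise disjoint tuples (viewed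 as sets) with |𝒜* ∩ 𝒮ᵢ| ≤ σn/(4ℓ²) for all i, total size ∑_{A ∈ 𝒜*}|A| ≤ σn, every element of 𝒜* has at least one neighbor in 𝒯, and every u ∈ 𝒯 has at least σ²n/(32ℓ²) neighbors in 𝒜* ∩ 𝒮ᵢ for some i. Consequently, for every ℬ ⊆ 𝒯 with |ℬ| ≤ σ²n/(32ℓ²), the bipartite graph Γ[𝒜*, ℬ] contains a matching saturating ℬ. -/
open scoped Classical

/-!
Lay out, for every length `i ≤ ℓ`, a system of `m = ⌊σn/(4ℓ²)⌋` tuples of length `i`, all of them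
pairwise disjoint, and move the whole layout by a uniformly random permutation of the vertices.
The tuples of length `i` then form a uniformly random array of distinct vertices, and, compared with
an array of independent vertices, all its probabilities are inflated by a factor of at most
`n ^ q / (n)_q ≤ exp (q² / (n - q))`, where `q = mi` is its size.
So the number `X` of tuples that are neighbors of a given `u ∈ 𝒯` satisfies
`E exp (-X) ≤ exp (5/8 - 7t/3)` with `t = σ²n/(32ℓ²)`. Since `|𝒯| ≤ exp t`, averaging the
sum of `exp (-X)` over all `u` yields one permutation for which every `u` has more than `t` hits.
The members of this layout that lie in `𝒮` and have a neighbor form `𝒜*`, and Hall's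
theorem gives the matchings.
-/

section
open Finset Function
open scoped BigOperators

theorem expect_smul_eq_expect {G X M : Type*} [Group G] [Fintype G] [Fintype X] [MulAction G X]
    [MulAction.IsPretransitive G X] [AddCommMonoid M] [Module ℚ≥0 M] (F : X → M) (x : X) :
    𝔼 g : G, F (g • x) = 𝔼 y, F y := by
  have orbit_independent (y : X) : 𝔼 g : G, F (g • y) = 𝔼 g : G, F (g • x) := by
    obtain ⟨h, rfl⟩ := MulAction.exists_smul_eq G x y
    exact Fintype.expect_equiv (Equiv.mulRight h) _ _ fun g => by simp [mul_smul]
  have : Nonempty X := ⟨x⟩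
  calc 𝔼 g : G, F (g • x) = 𝔼 y : X, 𝔼 g : G, F (g • y) := by
        simp only [orbit_independent, Fintype.expect_const]
    _ = 𝔼 g : G, 𝔼 y, F (g • y) := expect_comm _ _ _
    _ = 𝔼 g : G, 𝔼 y, F y :=
        expect_congr rfl fun g _ => Fintype.expect_equiv (MulAction.toPerm g) _ _ fun _ => rfl
    _ = 𝔼 y, F y := Fintype.expect_const _

theorem exists_forall_lt_of_sum_expect_exp_neg_lt {Ω T : Type*} [Fintype Ω] [Nonempty Ω]
    [Fintype T] (X : T → Ω → ℝ) {t : ℝ}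
    (h : ∑ u, 𝔼 ω, Real.exp (-X u ω) < Real.exp (-t)) : ∃ ω, ∀ u, t < X u ω := by
  rw [← expect_sum_comm] at h
  obtain ⟨ω, -, hω⟩ := exists_lt_of_expect_lt univ_nonempty h
  refine ⟨ω, fun u => ?_⟩
  have := (single_le_sum (fun v _ => (Real.exp_pos (-X v ω)).le) (mem_univ u)).trans_lt hω
  linarith [Real.exp_lt_exp.1 this]

variable {I K J V : Type*}

/-- The tuple in row `k` of an array `f` of pairwise distinct vertices, whose rows are indexed by
`K` and whose columns are indexed by `J`. -/
def row (f : K × J ↪ V) (k : K) : J ↪ V :=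
  (Embedding.sectR k J).trans f

theorem row_injective : Injective (row : (K × J ↪ V) → K → J ↪ V) := fun _ _ h =>
  Embedding.ext fun x => DFunLike.congr_fun (congrFun h x.1) x.2

theorem sum_prod_row_le [Fintype K] [Fintype J] [Fintype V] {w : (J ↪ V) → ℝ}
    (hw : ∀ a, 0 ≤ w a) :
    ∑ f : K × J ↪ V, ∏ k, w (row f k) ≤ (∑ a, w a) ^ Fintype.card K :=
  calc ∑ f : K × J ↪ V, ∏ k, w (row f k)
      = ∑ g ∈ univ.map ⟨row, row_injective⟩, ∏ k : K, w (g k) :=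
        (sum_map univ ⟨row, row_injective⟩ fun g : K → J ↪ V => ∏ k, w (g k)).symm
    _ ≤ ∑ g : K → J ↪ V, ∏ k, w (g k) :=
        sum_le_univ_sum_of_nonneg fun g => prod_nonneg fun k _ => hw (g k)
    _ = (∑ a, w a) ^ Fintype.card K := by
        rw [← Fintype.piFinset_univ, ← prod_univ_sum, prod_const, card_univ]

theorem expect_prod_row_le [Fintype K] [Fintype J] [Fintype V] [DecidableEq V]
    (e : K × J ↪ V) {w : (J ↪ V) → ℝ} (hw : ∀ a, 0 ≤ w a) :
    𝔼 p : Equiv.Perm V, ∏ k, w (row (p • e) k) ≤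
      (∑ a, w a) ^ Fintype.card K /
        (Fintype.card V).descFactorial (Fintype.card K * Fintype.card J) := by
  have : MulAction.IsPretransitive (Equiv.Perm V) (K × J ↪ V) :=
    ⟨Equiv.Perm.exists_smul_eq_embedding⟩
  rw [expect_smul_eq_expect (fun f : K × J ↪ V => ∏ k, w (row f k)), Fintype.expect_eq_sum_div_card,
    Fintype.card_embedding_eq, Fintype.card_prod]
  gcongr
  exact sum_prod_row_le hw

theorem sum_ite_mem_exp_neg_one_le {α : Type*} [Fintype α] (N : Set α) :
    ∑ a, (if a ∈ N then Real.exp (-1) else 1) ≤ Fintype.card α - 5 / 8 * (N.ncard : ℝ) := by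
  have exp_neg_one_le : Real.exp (-1) ≤ 3 / 8 := by
    rw [Real.exp_neg, inv_le_comm₀ (Real.exp_pos 1) (by norm_num)]
    linarith [Real.exp_one_gt_d9]
  calc ∑ a, (if a ∈ N then Real.exp (-1) else 1)
      ≤ ∑ a, (1 - 5 / 8 * if a ∈ N then (1 : ℝ) else 0) :=
        sum_le_sum fun a _ => by split_ifs <;> linarith
    _ = Fintype.card α - 5 / 8 * (N.ncard : ℝ) := by
        rw [sum_sub_distrib, ← mul_sum, sum_boole, Set.ncard_eq_toFinset_card',
          Set.filter_mem_univ_eq_toFinset]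
        simp

theorem pow_mul_exp_neg_le_descFactorial {n q : ℕ} (hq : q < n) :
    (n : ℝ) ^ q * Real.exp (-(q ^ 2 / (n - q))) ≤ n.descFactorial q := by
  have hqn : (q : ℝ) < n := mod_cast hq
  have hn : (0 : ℝ) < n := (Nat.cast_nonneg q).trans_lt hqn
  have base : (n : ℝ) * Real.exp (-(q / (n - q))) ≤ n - q := by
    have hlog := Real.one_sub_inv_le_log_of_pos (div_pos (sub_pos.2 hqn) hn)
    have hexponent : 1 - ((n - q) / n : ℝ)⁻¹ = -(q / (n - q)) := by
      field_simp [(sub_pos.2 hqn).ne']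
      ring
    rw [hexponent, Real.le_log_iff_exp_le (div_pos (sub_pos.2 hqn) hn), le_div_iff₀' hn] at hlog
    exact hlog
  calc (n : ℝ) ^ q * Real.exp (-(q ^ 2 / (n - q)))
      = (n * Real.exp (-(q / (n - q)))) ^ q := by
        rw [mul_pow, ← Real.exp_nat_mul]
        ring_nf
    _ ≤ (n - q) ^ q := by gcongr
    _ ≤ ((n + 1 - q : ℕ) : ℝ) ^ q := by
        gcongr
        rw [Nat.cast_sub (by omega)]
        push_cast
        linarith
    _ ≤ n.descFactorial q := mod_cast Nat.pow_sub_le_descFactorial n q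

theorem expect_exp_neg_card_row_mem_le [Fintype K] [Fintype J] [Fintype V] [DecidableEq V]
    (e : K × J ↪ V) (N : Set (J ↪ V)) {σ : ℝ}
    (hN : σ * (Fintype.card V : ℝ) ^ Fintype.card J ≤ N.ncard)
    (hKJ : Fintype.card K * Fintype.card J < Fintype.card V) :
    𝔼 p : Equiv.Perm V, Real.exp (-#{k | row (p • e) k ∈ N}) ≤
      Real.exp ((Fintype.card K * Fintype.card J : ℕ) ^ 2 /
        (Fintype.card V - (Fintype.card K * Fintype.card J : ℕ)) -
          5 / 8 * σ * Fintype.card K) := by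
  set n := Fintype.card V
  set m := Fintype.card K
  set j := Fintype.card J
  set q := m * j with hq
  have hn : (0 : ℝ) < n := mod_cast (Nat.zero_le q).trans_lt hKJ
  let w (a : J ↪ V) : ℝ := if a ∈ N then Real.exp (-1) else 1
  have hw (a) : 0 ≤ w a := by positivity
  have exp_neg_eq_prod (p : Equiv.Perm V) :
      Real.exp (-#{k | row (p • e) k ∈ N}) = ∏ k, w (row (p • e) k) := by
    rw [prod_ite, prod_const_one, mul_one, prod_const, ← Real.exp_nat_mul, mul_neg_one]
  have sum_w_le : ∑ a, w a ≤ n ^ j * Real.exp (-(5 / 8 * σ)) := by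
    have card_le : (Fintype.card (J ↪ V) : ℝ) ≤ n ^ j := by
      rw [Fintype.card_embedding_eq]
      exact_mod_cast Nat.descFactorial_le_pow n j
    calc ∑ a, w a ≤ n ^ j * (1 - 5 / 8 * σ) := by
          linarith [sum_ite_mem_exp_neg_one_le N]
      _ ≤ n ^ j * Real.exp (-(5 / 8 * σ)) := by gcongr; exact Real.one_sub_le_exp_neg _
  simp only [exp_neg_eq_prod]
  calc 𝔼 p : Equiv.Perm V, ∏ k, w (row (p • e) k)
      ≤ (∑ a, w a) ^ m / n.descFactorial q := expect_prod_row_le e hw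
    _ ≤ (n ^ j * Real.exp (-(5 / 8 * σ))) ^ m / (n ^ q * Real.exp (-(q ^ 2 / (n - q)))) := by
        have := pow_mul_exp_neg_le_descFactorial hKJ
        have : 0 ≤ ∑ a, w a := sum_nonneg fun a _ => hw a
        gcongr
    _ = Real.exp (q ^ 2 / (n - q) - 5 / 8 * σ * m) := by
        rw [mul_pow, ← pow_mul, mul_comm j m, ← hq, mul_div_mul_left _ _ (by positivity),
          ← Real.exp_nat_mul, ← Real.exp_sub]
        ring_nf

/-- The `k`-th tuple of length `r i` in a layout `e`, that is, in a system of pairwise disjoint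
tuples in `V` with a tuple of length `r i` for every pair of `i : I` and `k : K`. -/
def block {r : I → ℕ} (e : (Σ i, K × Fin (r i)) ↪ V) (x : I × K) : Σ i : ℕ, Fin i ↪ V :=
  ⟨r x.1, row ((Embedding.sigmaMk x.1).trans e) x.2⟩

section Block
variable {r : I → ℕ} (e : (Σ i, K × Fin (r i)) ↪ V)

theorem disjoint_range_block {x y : I × K} (hxy : x ≠ y) :
    Disjoint (Set.range (block e x).2) (Set.range (block e y).2) := by
  rw [Set.disjoint_left]
  rintro - ⟨a, rfl⟩ ⟨b, hab⟩
  have same_block := congrArg (fun z => (z.1, z.2.1)) (e.injective hab)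
  exact hxy same_block.symm

theorem block_injective (hr : ∀ i, 0 < r i) : Injective (block e) := by
  intro x y h
  by_contra hxy
  have hdisj := disjoint_range_block e hxy
  rw [← h, disjoint_self, Set.bot_eq_empty, Set.range_eq_empty_iff] at hdisj
  exact hdisj.false ⟨0, hr x.1⟩

theorem card_filter_fst_eq_le [Fintype K] (hr : Injective r) {𝒜 : Finset (Σ i : ℕ, Fin i ↪ V)}
    (h𝒜 : ∀ a ∈ 𝒜, ∃ x, block e x = a) (i : I) : #{a ∈ 𝒜 | a.1 = r i} ≤ Fintype.card K := by
  have hsub : ({a ∈ 𝒜 | a.1 = r i} : Finset _) ⊆ univ.image fun k => block e (i, k) := by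
    intro a ha
    obtain ⟨ha, hai⟩ := mem_filter.1 ha
    obtain ⟨⟨j, k⟩, rfl⟩ := h𝒜 a ha
    obtain rfl := hr hai
    exact mem_image_of_mem _ (mem_univ k)
  exact (card_le_card hsub).trans card_image_le

theorem card_block_mem_le [Fintype K] (hr : ∀ i, 0 < r i) {𝒜 : Finset (Σ i : ℕ, Fin i ↪ V)}
    {N : Set (Σ i : ℕ, Fin i ↪ V)} {P : (Σ i : ℕ, Fin i ↪ V) → Prop}
    (hN : ∀ x, block e x ∈ N → block e x ∈ 𝒜 ∧ P (block e x)) (i : I) :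
    #{k | block e (i, k) ∈ N} ≤ #{a ∈ 𝒜 | a.1 = r i ∧ P a} := by
  refine card_le_card_of_injOn (fun k => block e (i, k)) (fun k hk => ?_) fun k _ k' _ h => ?_
  · obtain ⟨hk𝒜, hkP⟩ := hN (i, k) (mem_filter.1 hk).2
    exact mem_filter.2 ⟨hk𝒜, rfl, hkP⟩
  · exact (Prod.ext_iff.1 (block_injective e hr h)).2
end Block

theorem nonempty_block_embedding [Fintype V] {ℓ m : ℕ} (h : ℓ ^ 2 * m ≤ Fintype.card V) :
    Nonempty ((Σ i : Icc 1 ℓ, Fin m × Fin i) ↪ V) := by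
  refine Embedding.nonempty_of_card_le (le_trans ?_ h)
  calc Fintype.card (Σ i : Icc 1 ℓ, Fin m × Fin i) = ∑ i : Icc 1 ℓ, m * i := by simp
    _ ≤ ∑ _i : Icc 1 ℓ, m * ℓ := by gcongr with i; exact (mem_Icc.1 i.2).2
    _ = ℓ ^ 2 * m := by simp; ring

theorem expect_exponent_le {σ n : ℝ} (hσ₀ : 0 ≤ σ) (hσ₁ : σ ≤ 1) (hn : 0 < n) {ℓ i m : ℕ}
    (hi : i ∈ Icc 1 ℓ) (hm : m = ⌊σ * n / (4 * ℓ ^ 2)⌋₊) :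
    (m * i : ℕ) < n ∧ ((m * i : ℕ) : ℝ) ^ 2 / (n - (m * i : ℕ)) - 5 / 8 * σ * m ≤
      5 / 8 - 7 / 3 * (σ ^ 2 * n / (32 * ℓ ^ 2)) := by
  obtain ⟨hi, hiℓ⟩ := mem_Icc.1 hi
  have hℓ : (1 : ℝ) ≤ ℓ := mod_cast hi.trans hiℓ
  set q := m * i with hq
  have hqℓ : (q : ℝ) ≤ σ * n / (4 * ℓ) := by
    calc (q : ℝ) = m * i := by push_cast [hq]; rfl
      _ ≤ σ * n / (4 * ℓ ^ 2) * ℓ := by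
        gcongr
        exact hm ▸ Nat.floor_le (by positivity)
      _ = σ * n / (4 * ℓ) := by field_simp
  have hqn : (q : ℝ) ≤ n / 4 := by
    calc (q : ℝ) ≤ σ * n / (4 * ℓ) := hqℓ
      _ ≤ 1 * n / (4 * 1) := by gcongr
      _ = n / 4 := by ring
  refine ⟨by linarith, ?_⟩
  have overlap_le : (q : ℝ) ^ 2 / (n - q) ≤ 8 / 3 * (σ ^ 2 * n / (32 * ℓ ^ 2)) := by
    calc (q : ℝ) ^ 2 / (n - q) ≤ (σ * n / (4 * ℓ)) ^ 2 / (3 / 4 * n) := by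
          gcongr
          linarith
      _ = 8 / 3 * (σ ^ 2 * n / (32 * ℓ ^ 2)) := by field_simp; ring
  have le_mean : 8 * (σ ^ 2 * n / (32 * ℓ ^ 2)) - 1 ≤ σ * m := by
    calc 8 * (σ ^ 2 * n / (32 * ℓ ^ 2)) - 1 ≤ σ * (σ * n / (4 * ℓ ^ 2)) - σ := by
          have : 8 * (σ ^ 2 * n / (32 * ℓ ^ 2)) = σ * (σ * n / (4 * ℓ ^ 2)) := by
            ring
          linarith
      _ ≤ σ * (m + 1) - σ := by
        gcongr
        exact hm ▸ (Nat.lt_floor_add_one _).le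
      _ = σ * m := by ring
  linarith

theorem expect_exp_neg_card_row_mem_le_of_eq_floor [Fintype V] [Nonempty V] [DecidableEq V]
    {σ : ℝ} (hσ₀ : 0 ≤ σ) (hσ₁ : σ ≤ 1) {ℓ i m : ℕ} (hi : i ∈ Icc 1 ℓ)
    (hm : m = ⌊σ * Fintype.card V / (4 * ℓ ^ 2)⌋₊) (e : Fin m × Fin i ↪ V) {N : Set (Fin i ↪ V)}
    (hN : σ * (Fintype.card V : ℝ) ^ i ≤ N.ncard) :
    𝔼 p : Equiv.Perm V, Real.exp (-#{k | row (p • e) k ∈ N}) ≤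
      Real.exp (5 / 8 - 7 / 3 * (σ ^ 2 * Fintype.card V / (32 * ℓ ^ 2))) := by
  obtain ⟨hmi, hexp⟩ := expect_exponent_le hσ₀ hσ₁ (Nat.cast_pos.2 Fintype.card_pos) hi hm
  have := expect_exp_neg_card_row_mem_le e N (σ := σ)
  simp only [Fintype.card_fin] at this
  exact (this hN (Nat.cast_lt.1 hmi)).trans (Real.exp_le_exp.2 hexp)

theorem exists_embedding_forall_lt_card_block_mem [Fintype V] {T : Type*} [Fintype T]
    {ℓ m : ℕ} {σ t : ℝ} (hσ₀ : 0 ≤ σ) (hσ₁ : σ ≤ 1)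
    (hm : m = ⌊σ * Fintype.card V / (4 * ℓ ^ 2)⌋₊)
    (ht : t = σ ^ 2 * Fintype.card V / (32 * ℓ ^ 2)) (ht₂ : 2 ≤ t)
    (hT : Fintype.card T ≤ Real.exp t) (N : T → Set (Σ i : ℕ, Fin i ↪ V))
    (hN : ∀ u, ∃ i ∈ Icc 1 ℓ, σ * (Fintype.card V : ℝ) ^ i ≤ (Sigma.mk i ⁻¹' N u).ncard) :
    ∃ e : (Σ i : Icc 1 ℓ, Fin m × Fin i) ↪ V,
      ∀ u, ∃ i : Icc 1 ℓ, t < #{k | block e (i, k) ∈ N u} := by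
  have hV : (0 : ℝ) < Fintype.card V := Nat.cast_pos.2 <| Nat.pos_of_ne_zero fun h => by
    norm_num [h, ht] at ht₂
  have hℓ : 0 < ℓ := Nat.pos_of_ne_zero fun h => by
    norm_num [h, ht] at ht₂
  choose i hi hN using hN
  have blocks_fit : ℓ ^ 2 * m ≤ Fintype.card V := by
    have hm_le : (m : ℝ) ≤ σ * Fintype.card V / (4 * ℓ ^ 2) := hm ▸ Nat.floor_le (by positivity)
    rw [le_div_iff₀ (by positivity)] at hm_le
    have : (ℓ ^ 2 * m : ℝ) ≤ Fintype.card V := by nlinarith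
    exact_mod_cast this
  obtain ⟨e⟩ := nonempty_block_embedding blocks_fit
  let hits (u : T) (p : Equiv.Perm V) : ℝ := #{k | block (p • e) (⟨i u, hi u⟩, k) ∈ N u}
  have expect_exp_neg_hits_le (u : T) :
      𝔼 p, Real.exp (-hits u p) ≤ Real.exp (5 / 8 - 7 / 3 * t) := by
    have : Nonempty V := Fintype.card_pos_iff.1 (Nat.cast_pos.1 hV)
    let slice : Fin m × Fin (i u) ↪ V := (Embedding.sigmaMk (⟨i u, hi u⟩ : Icc 1 ℓ)).trans e
    have slice_bound := expect_exp_neg_card_row_mem_le_of_eq_floor hσ₀ hσ₁ (hi u) hm slice (hN u)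
    have hits_eq (p : Equiv.Perm V) :
        hits u p = #{k | row (p • slice) k ∈ Sigma.mk (i u) ⁻¹' N u} := rfl
    simpa only [hits_eq, ht] using slice_bound
  obtain ⟨p, hp⟩ := exists_forall_lt_of_sum_expect_exp_neg_lt hits (t := t) <|
    calc ∑ u, 𝔼 p, Real.exp (-hits u p)
        ≤ ∑ _u : T, Real.exp (5 / 8 - 7 / 3 * t) :=
          sum_le_sum fun u _ => expect_exp_neg_hits_le u
      _ = Fintype.card T * Real.exp (5 / 8 - 7 / 3 * t) := by
          rw [sum_const, card_univ, nsmul_eq_mul]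
      _ ≤ Real.exp t * Real.exp (5 / 8 - 7 / 3 * t) := by gcongr
      _ < Real.exp (-t) := by
          rw [← Real.exp_add, Real.exp_lt_exp]
          linarith
  exact ⟨p • e, fun u => ⟨⟨i u, hi u⟩, hp u⟩⟩

theorem exists_saturating_matching {α T : Type*} [Nonempty α] {Adj : α → T → Prop}
    {A : Finset α} {B : Finset T} (h : ∀ b ∈ B, #B ≤ #{a ∈ A | Adj a b}) :
    ∃ f : T → α, Set.InjOn f B ∧ ∀ b ∈ B, f b ∈ A ∧ Adj (f b) b := by
  have hall (S : Finset B) : #S ≤ #(S.biUnion fun b => {a ∈ A | Adj a b}) := by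
    obtain rfl | ⟨b, hb⟩ := S.eq_empty_or_nonempty
    · simp
    calc #S ≤ #B := by simpa using card_le_univ S
      _ ≤ #{a ∈ A | Adj a b} := h b b.2
      _ ≤ _ := card_le_card (subset_biUnion_of_mem (fun b : B => {a ∈ A | Adj a b}) hb)
  obtain ⟨f, hf, hfA⟩ := (all_card_le_biUnion_card_iff_exists_injective _).1 hall
  have extend_apply (b : B) : extend Subtype.val f (fun _ => Classical.arbitrary α) b = f b :=
    Subtype.val_injective.extend_apply _ _ b
  refine ⟨extend Subtype.val f fun _ => Classical.arbitrary α, ?_, fun b hb => ?_⟩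
  · intro b hb c hc hbc
    rw [extend_apply ⟨b, hb⟩, extend_apply ⟨c, hc⟩] at hbc
    exact congrArg Subtype.val (hf hbc)
  · rw [extend_apply ⟨b, hb⟩]
    exact mem_filter.1 (hfA ⟨b, hb⟩)

theorem sum_le_of_card_fiber_le_div_sq {α : Type*} {A : Finset α} {f : α → ℕ} {ℓ : ℕ} {s : ℝ}
    (hs : 0 ≤ s) (hf : ∀ a ∈ A, f a ∈ Icc 1 ℓ)
    (hcard : ∀ i ∈ Icc 1 ℓ, (#{a ∈ A | f a = i} : ℝ) ≤ s / ℓ ^ 2) :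
    ∑ a ∈ A, (f a : ℝ) ≤ s :=
  calc ∑ a ∈ A, (f a : ℝ) = ∑ i ∈ Icc 1 ℓ, (i : ℝ) * #{a ∈ A | f a = i} := by
        rw [← sum_fiberwise_of_maps_to hf]
        refine sum_congr rfl fun i _ => ?_
        rw [sum_congr rfl fun a ha => by rw [(mem_filter.1 ha).2], sum_const, nsmul_eq_mul,
          mul_comm]
    _ ≤ ∑ _i ∈ Icc 1 ℓ, (ℓ : ℝ) * (s / ℓ ^ 2) := by
        refine sum_le_sum fun i hi => ?_
        have := hcard i hi
        gcongr
        exact (mem_Icc.1 hi).2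
    _ = s * (ℓ ^ 2 / ℓ ^ 2) := by
        rw [sum_const, Nat.card_Icc, Nat.add_sub_cancel, nsmul_eq_mul]
        ring
    _ ≤ s * 1 := by gcongr; exact div_self_le_one _
    _ = s := mul_one s

theorem ncard_setOf_fst_eq {ι : Type*} {α : ι → Type*} (P : Set (Sigma α)) (i : ι) :
    {s ∈ P | s.1 = i}.ncard = (Sigma.mk i ⁻¹' P).ncard := by
  rw [← Set.ncard_image_of_injective (Sigma.mk i ⁻¹' P) sigma_mk_injective,
    Set.image_preimage_eq_inter_range, Set.range_sigmaMk]
  rfl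

theorem ncard_le_of_fst_mem_Icc [Fintype V] {ℓ : ℕ}
    {𝒮 : Set (Σ i : ℕ, Fin i ↪ V)} (h𝒮 : ∀ s ∈ 𝒮, 1 ≤ s.1 ∧ s.1 ≤ ℓ) :
    𝒮.ncard ≤ ℓ * Fintype.card V ^ ℓ := by
  calc 𝒮.ncard ≤ #((Icc 1 ℓ).sigma fun i => (univ : Finset (Fin i ↪ V))) := by
        rw [← Set.ncard_coe_finset]
        exact Set.ncard_le_ncard fun s hs => by simpa using h𝒮 s hs
    _ = ∑ i ∈ Icc 1 ℓ, (Fintype.card V).descFactorial i := by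
        simp only [card_sigma, card_univ, Fintype.card_embedding_eq, Fintype.card_fin]
    _ ≤ ∑ _i ∈ Icc 1 ℓ, Fintype.card V ^ ℓ := by
        refine sum_le_sum fun i hi => ?_
        obtain ⟨hi, hiℓ⟩ := mem_Icc.1 hi
        rcases (Fintype.card V).eq_zero_or_pos with hV | hV
        · simp [hV, Nat.descFactorial_of_lt hi]
        · exact (Nat.descFactorial_le_pow _ _).trans (Nat.pow_le_pow_right hV hiℓ)
    _ = ℓ * Fintype.card V ^ ℓ := by simp

theorem eventually_mul_pow_le_exp (C : ℝ) (k : ℕ) {c : ℝ} (hc : 0 < c) :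
    ∀ᶠ n : ℕ in Filter.atTop, C * n ^ k ≤ Real.exp (c * n) := by
  have h := ((isLittleO_pow_exp_pos_mul_atTop k hc).const_mul_left C).bound one_pos
  filter_upwards [tendsto_natCast_atTop_atTop.eventually h] with n hn
  simpa using (le_abs_self _).trans hn

theorem eventually_two_le_and_mul_pow_le_exp {σ : ℝ} (hσ : 0 < σ) {ℓ : ℕ} (hℓ : 1 ≤ ℓ) :
    ∀ᶠ n : ℕ in Filter.atTop, 2 ≤ σ ^ 2 * n / (32 * ℓ ^ 2) ∧
      ℓ * (n : ℝ) ^ ℓ ≤ Real.exp (σ ^ 2 * n / (32 * ℓ ^ 2)) := by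
  have rate_pos : 0 < σ ^ 2 / (32 * ℓ ^ 2) := by positivity
  simp only [mul_div_right_comm]
  exact ((tendsto_natCast_atTop_atTop.const_mul_atTop rate_pos).eventually_ge_atTop 2).and
    (eventually_mul_pow_le_exp ℓ ℓ rate_pos)

theorem general_absorbing_general [Fintype V] {ℓ n : ℕ} (hV : Fintype.card V = n) {σ : ℝ}
    (hσ₀ : 0 ≤ σ) (hσ₁ : σ ≤ 1) (hn : 2 ≤ σ ^ 2 * n / (32 * ℓ ^ 2)) {T : Type*} [Fintype T]
    (hT : Fintype.card T ≤ Real.exp (σ ^ 2 * n / (32 * ℓ ^ 2)))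
    (𝒮 : Set (Σ i : ℕ, Fin i ↪ V)) (Adj : (Σ i : ℕ, Fin i ↪ V) → T → Prop)
    (hdeg : ∀ u : T, ∃ i ∈ Icc 1 ℓ,
      σ * (n : ℝ) ^ i ≤ ({s ∈ 𝒮 | s.1 = i ∧ Adj s u}.ncard : ℝ)) :
    ∃ 𝒜 : Finset (Σ i : ℕ, Fin i ↪ V),
      ↑𝒜 ⊆ 𝒮 ∧
      (∀ a ∈ 𝒜, ∀ b ∈ 𝒜, a ≠ b → Disjoint (Set.range a.2) (Set.range b.2)) ∧
      (∀ i ∈ Icc 1 ℓ, (#{a ∈ 𝒜 | a.1 = i} : ℝ) ≤ σ * n / (4 * ℓ ^ 2)) ∧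
      (∑ a ∈ 𝒜, (a.1 : ℝ) ≤ σ * n) ∧
      (∀ a ∈ 𝒜, ∃ u : T, Adj a u) ∧
      (∀ u : T, ∃ i ∈ Icc 1 ℓ,
        σ ^ 2 * n / (32 * ℓ ^ 2) ≤ (#{a ∈ 𝒜 | a.1 = i ∧ Adj a u} : ℝ)) ∧
      ∀ ℬ : Finset T, (#ℬ : ℝ) ≤ σ ^ 2 * n / (32 * ℓ ^ 2) →
        ∃ f : T → (Σ i : ℕ, Fin i ↪ V),
          Set.InjOn f ↑ℬ ∧ ∀ b ∈ ℬ, f b ∈ 𝒜 ∧ Adj (f b) b := by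
  subst hV
  obtain ⟨N, mem_N⟩ : ∃ N : T → Set (Σ i : ℕ, Fin i ↪ V), ∀ {u s}, s ∈ N u ↔ s ∈ 𝒮 ∧ Adj s u :=
    ⟨fun u => {s ∈ 𝒮 | Adj s u}, Iff.rfl⟩
  obtain ⟨e, he⟩ := exists_embedding_forall_lt_card_block_mem hσ₀ hσ₁ rfl rfl hn hT N fun u => by
    simpa only [← ncard_setOf_fst_eq, mem_N, and_assoc, and_comm (a := Adj _ _)] using hdeg u
  let 𝒜 : Finset (Σ i : ℕ, Fin i ↪ V) := {a ∈ univ.image (block e) | a ∈ 𝒮 ∧ ∃ u, Adj a u}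
  have mem_𝒜 {a} : a ∈ 𝒜 ↔ (∃ x, block e x = a) ∧ a ∈ 𝒮 ∧ ∃ u, Adj a u := by
    simp only [𝒜, mem_filter, mem_image, mem_univ, true_and]
  have exists_block (a) (ha : a ∈ 𝒜) : ∃ x, block e x = a := (mem_𝒜.1 ha).1
  have length_mem (a) (ha : a ∈ 𝒜) : a.1 ∈ Icc 1 ℓ := by
    obtain ⟨x, rfl⟩ := exists_block a ha
    exact x.1.2
  have card_length_le (i) (hi : i ∈ Icc 1 ℓ) :
      (#{a ∈ 𝒜 | a.1 = i} : ℝ) ≤ σ * Fintype.card V / (4 * ℓ ^ 2) := by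
    have := card_filter_fst_eq_le e Subtype.val_injective exists_block ⟨i, hi⟩
    rw [Fintype.card_fin] at this
    exact (Nat.cast_le.2 this).trans (Nat.floor_le (by positivity))
  have degree_ge (u : T) : ∃ i ∈ Icc 1 ℓ,
      σ ^ 2 * Fintype.card V / (32 * ℓ ^ 2) ≤ (#{a ∈ 𝒜 | a.1 = i ∧ Adj a u} : ℝ) := by
    obtain ⟨i, hi⟩ := he u
    refine ⟨i, i.2, hi.le.trans (Nat.cast_le.2 ?_)⟩
    refine card_block_mem_le e (fun i => (mem_Icc.1 i.2).1) (fun x hx => ?_) i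
    obtain ⟨hx𝒮, hxu⟩ := mem_N.1 hx
    exact ⟨mem_𝒜.2 ⟨⟨x, rfl⟩, hx𝒮, u, hxu⟩, hxu⟩
  refine ⟨𝒜, fun a ha => (mem_𝒜.1 ha).2.1, fun a ha b hb hab => ?_, card_length_le, ?_,
    fun a ha => (mem_𝒜.1 ha).2.2, degree_ge, fun ℬ hℬ => ?_⟩
  · obtain ⟨⟨x, rfl⟩, ⟨y, rfl⟩⟩ := And.intro (exists_block a ha) (exists_block b hb)
    exact disjoint_range_block e (ne_of_apply_ne _ hab)
  · have total_le := sum_le_of_card_fiber_le_div_sq (s := σ * Fintype.card V / 4) (by positivity)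
      length_mem (by simpa only [div_div] using card_length_le)
    linarith [mul_nonneg hσ₀ (Fintype.card V).cast_nonneg]
  · have : Nonempty (Σ i : ℕ, Fin i ↪ V) := ⟨⟨0, Embedding.ofIsEmpty⟩⟩
    refine exists_saturating_matching fun b _ => ?_
    obtain ⟨i, -, hi⟩ := degree_ge b
    refine (Nat.cast_le.1 (hℬ.trans hi)).trans (card_le_card ?_)
    exact monotone_filter_right _ fun a _ ha => ha.2

end

/-- general absorbing proposition: tuples of distinct elements of `[n]`
are modeled as sigma-pairs `⟨i, f⟩` with `f : Fin i ↪ Fin n`.  Given a bipartite graph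
`Adj` between a family `𝒮` of such tuples (of lengths in `[ℓ]`) and a finite set `𝒯`
with `|𝒯| ≤ |𝒮|`, in which every `u ∈ 𝒯` has, for some `i ∈ [ℓ]`, at least `σᵢnⁱ`
neighbors among the `i`-tuples of `𝒮`, there is (for `n` sufficiently large) a family
`𝒜* ⊆ 𝒮` of pairwise disjoint tuples with `|𝒜* ∩ 𝒮ᵢ| ≤ σn/(4ℓ²)`, total size at most
`σn`, every member of `𝒜*` having a neighbor in `𝒯`, and every `u ∈ 𝒯` having at least
`σ²n/(32ℓ²)` neighbors in `𝒜* ∩ 𝒮ᵢ` for some `i`; consequently every `ℬ ⊆ 𝒯` with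
`|ℬ| ≤ σ²n/(32ℓ²)` is saturated by a matching into `𝒜*`. -/
theorem general_absorbing (ℓ : ℕ) (hℓ : 1 ≤ ℓ) (σ : ℕ → ℝ)
    (hσ : ∀ i ∈ Finset.Icc 1 ℓ, 0 < σ i ∧ σ i ≤ 1)
    (σm : ℝ) (hσm : ∀ i ∈ Finset.Icc 1 ℓ, σm ≤ σ i)
    (hσm' : ∃ i ∈ Finset.Icc 1 ℓ, σm = σ i) :
    ∃ n₀ : ℕ, ∀ n : ℕ, n₀ ≤ n →
    ∀ (T : Type) [Fintype T],
    ∀ (𝒮 : Set (Σ i : ℕ, Fin i ↪ Fin n)) (Adj : (Σ i : ℕ, Fin i ↪ Fin n) → T → Prop),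
    (∀ s ∈ 𝒮, 1 ≤ s.1 ∧ s.1 ≤ ℓ) →
    Fintype.card T ≤ 𝒮.ncard →
    (∀ u : T, ∃ i ∈ Finset.Icc 1 ℓ,
      σ i * (n : ℝ) ^ i ≤ ({s ∈ 𝒮 | s.1 = i ∧ Adj s u}.ncard : ℝ)) →
    ∃ 𝒜 : Finset (Σ i : ℕ, Fin i ↪ Fin n),
      ↑𝒜 ⊆ 𝒮 ∧
      (∀ a ∈ 𝒜, ∀ b ∈ 𝒜, a ≠ b → Disjoint (Set.range a.2) (Set.range b.2)) ∧
      (∀ i ∈ Finset.Icc 1 ℓ,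
        (((𝒜.filter (fun a => a.1 = i)).card : ℝ)) ≤ σm * n / (4 * ℓ ^ 2)) ∧
      ((∑ a ∈ 𝒜, (a.1 : ℝ)) ≤ σm * n) ∧
      (∀ a ∈ 𝒜, ∃ u : T, Adj a u) ∧
      (∀ u : T, ∃ i ∈ Finset.Icc 1 ℓ,
        σm ^ 2 * n / (32 * ℓ ^ 2) ≤
          (((𝒜.filter (fun a => a.1 = i ∧ Adj a u)).card : ℝ))) ∧
      ∀ ℬ : Finset T, ((ℬ.card : ℝ) ≤ σm ^ 2 * n / (32 * ℓ ^ 2)) →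
        ∃ f : T → (Σ i : ℕ, Fin i ↪ Fin n),
          Set.InjOn f ↑ℬ ∧ ∀ b ∈ ℬ, f b ∈ 𝒜 ∧ Adj (f b) b := by
  obtain ⟨i₀, hi₀, rfl⟩ := hσm'
  obtain ⟨hσ₀, hσ₁⟩ := hσ i₀ hi₀
  obtain ⟨n₀, hn₀⟩ := Filter.eventually_atTop.1 (eventually_two_le_and_mul_pow_le_exp hσ₀ hℓ)
  refine ⟨n₀, fun n hn T _ 𝒮 Adj h𝒮 hT hdeg => ?_⟩
  obtain ⟨two_le, poly_le⟩ := hn₀ n hn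
  have card_T_le : (Fintype.card T : ℝ) ≤ ℓ * (n : ℝ) ^ ℓ := by
    exact_mod_cast hT.trans (by simpa only [Fintype.card_fin] using ncard_le_of_fst_mem_Icc h𝒮)
  refine general_absorbing_general (Fintype.card_fin n) hσ₀.le hσ₁ two_le
    (card_T_le.trans poly_le) 𝒮 Adj fun u => ?_
  obtain ⟨i, hi, hu⟩ := hdeg u
  exact ⟨i, hi, hu.trans' (by gcongr; exact hσm i hi)⟩
end
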